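/- Let Γ be a finite connected simple graph with r+1 vertices, where r+1 ≥ 3, and with n edges, where n ≥ 3, and let F_Γ be its Kirchhoff polynomial. Then for every spanning tree T of Γ, for every point a in the cone C^n_{T>0} = { a ∈ ℝ^n_{≥0} : a_e > 0 for all e ∈ T }, and for every real number s > (r−1)/r, the symmetric n×n matrix (−F_Γ·H_{F_Γ} + s·(∇F_Γ)ᵀ(∇F_Γ)) evaluated at a is positive definite. -/

import Mathlib

/-!
Fix a root `v₀` and let `B` be the reduced oriented incidence matrix of `Γ` (row `v₀` deleted).
The weighted matrix-tree theorem (`det_weighted_eq_sum`, `aeval_kirchhoff`) says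
`F_Γ(x) = det (B diag(x) Bᵀ)` over any commutative `ℝ`-algebra. It follows from the expansion
`det_mul_eq_sum_fun` of the determinant of a product and from the fact that a maximal minor of `B`
is `±1` on a spanning tree (`isUnit_det_minor`) and `0` otherwise (`det_minor_eq_zero`).

For a point `a` of the cone, `M = B diag(a) Bᵀ` is positive semidefinite with determinant
`F_Γ(a) > 0`, hence positive definite. For a direction `v ≠ 0` put `N = B diag(v) Bᵀ`. Then
`F_Γ(a + t v) = det (M + t N)`, and simultaneous diagonalization of `M` and `N` turns this into
`F_Γ(a) ∏ (1 + t λᵢ)` with `λ ∈ ℝ^r`. Comparing derivatives at `t = 0`, the value at `v` of the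
quadratic form in question is `F_Γ(a)² (∑ λᵢ² - (1 - s) (∑ λᵢ)²)`. By Cauchy-Schwarz
`(∑ λᵢ)² ≤ r ∑ λᵢ²`, and `(1 - s) r < 1`, so this is positive as soon as `λ ≠ 0`, that is, `N ≠ 0`
(`det_line_pos`). Finally `N ≠ 0` because `Γ` is simple, so that the weights `v` can be read off
from the weighted Laplacian (`weighted_eq_zero`).
-/
open MvPolynomial
/-- A spanning tree of a graph `G`, given as a set `T` of edges of `G` with `|V| - 1` edges
whose spanning subgraph is connected. -/
def IsSpanningTree {V : Type} [Fintype V] [DecidableEq V] (G : SimpleGraph V)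
    (T : Finset G.edgeSet) : Prop :=
  T.card = Fintype.card V - 1 ∧
    (SimpleGraph.fromEdgeSet (Subtype.val '' (T : Set G.edgeSet))).Connected

open scoped Classical in
/-- The Kirchhoff polynomial of a graph. -/
noncomputable def kirchhoff {V : Type} [Fintype V] [DecidableEq V] (G : SimpleGraph V)
    [Fintype G.edgeSet] : MvPolynomial G.edgeSet ℝ :=
  ∑ T : Finset G.edgeSet, if IsSpanningTree G T then ∏ e ∈ T, X e else 0

/-! ### Determinants, and polynomials restricted to a line -/

open Matrix in
/-- The ungrouped form of the Cauchy-Binet formula: multilinear expansion of `det (A * B)` along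
its rows, summed over all (not necessarily injective) choices of one row of `B` per row of `A`. -/
theorem det_mul_eq_sum_fun {m E R : Type*} [Fintype m] [DecidableEq m] [Fintype E]
    [DecidableEq E] [CommRing R] (A : Matrix m E R) (B : Matrix E m R) :
    (A * B).det = ∑ f : m → E, (∏ i, A i (f i)) * (Matrix.of fun i j => B (f i) j).det := by
  have h : (A * B) = fun i => ∑ e, A i e • B e := by
    ext i j
    simp [Matrix.mul_apply]
  rw [h]
  change (detRowAlternating (R := R) (n := m)).toMultilinearMap (fun i => ∑ e, A i e • B e) = _
  rw [MultilinearMap.map_sum]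
  refine Finset.sum_congr rfl fun f _ => ?_
  rw [MultilinearMap.map_smul_univ]
  rfl

/-- The chain rule for a polynomial curve `L` substituted into `p`. -/
theorem derivative_aeval_eq_sum {E : Type*} [Fintype E] (L : E → Polynomial ℝ)
    (p : MvPolynomial E ℝ) :
    Polynomial.derivative (aeval L p) =
      ∑ i, Polynomial.derivative (L i) * aeval L (pderiv i p) := by
  classical
  induction p using MvPolynomial.induction_on with
  | C c => simp
  | add p q hp hq => simp [hp, hq, mul_add, Finset.sum_add_distrib]
  | mul_X p e hp =>
    simp only [map_mul, Polynomial.derivative_mul, hp, Derivation.leibniz, smul_eq_mul, map_add,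
      mul_add, Finset.sum_add_distrib, aeval_X, pderiv_X, Finset.sum_mul]
    rw [add_comm]
    congr 1
    · rw [Finset.sum_eq_single e]
      · simp [mul_comm]
      · intro b _ hb
        simp [Pi.single_eq_of_ne hb.symm]
      · simp
    · refine Finset.sum_congr rfl fun i _ => ?_
      ring

theorem pderiv_comm_apply {E : Type*} (i j : E) (p : MvPolynomial E ℝ) :
    pderiv i (pderiv j p) = pderiv j (pderiv i p) := by
  classical
  have h : ⁅(pderiv i : Derivation ℝ (MvPolynomial E ℝ) (MvPolynomial E ℝ)),
      (pderiv j : Derivation ℝ (MvPolynomial E ℝ) (MvPolynomial E ℝ))⁆ = 0 := by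
    refine MvPolynomial.derivation_ext fun e => ?_
    simp only [Derivation.commutator_apply, pderiv_X, Pi.single_apply]
    split_ifs <;> simp
  have := congrArg (fun D : Derivation ℝ (MvPolynomial E ℝ) (MvPolynomial E ℝ) => D p) h
  simpa [Derivation.commutator_apply, sub_eq_zero] using this

theorem eval_zero_aeval_line {E : Type*} (a v : E → ℝ) (p : MvPolynomial E ℝ) :
    (aeval (fun e => Polynomial.C (a e) + Polynomial.C (v e) * Polynomial.X) p).eval 0 =
      eval a p := by
  induction p using MvPolynomial.induction_on with
  | C c => simp
  | add p q hp hq => simp [hp, hq]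
  | mul_X p e hp => simp [hp]

/-- The value and the first two derivatives at `0` of `∏ (1 + λᵢ t)`. -/
theorem prod_one_add_derivs {m : Type*} (l : m → ℝ) (s : Finset m) :
    (∏ i ∈ s, (1 + Polynomial.C (l i) * Polynomial.X)).eval 0 = 1 ∧
    (Polynomial.derivative (∏ i ∈ s, (1 + Polynomial.C (l i) * Polynomial.X))).eval 0 =
      ∑ i ∈ s, l i ∧
    (Polynomial.derivative (Polynomial.derivative
      (∏ i ∈ s, (1 + Polynomial.C (l i) * Polynomial.X)))).eval 0 =
      (∑ i ∈ s, l i) ^ 2 - ∑ i ∈ s, l i ^ 2 := by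
  classical
  induction s using Finset.induction_on with
  | empty => simp
  | insert j s hj ih =>
    obtain ⟨h0, h1, h2⟩ := ih
    simp only [Finset.prod_insert hj, Finset.sum_insert hj, Polynomial.derivative_mul,
      Polynomial.eval_add, Polynomial.eval_mul, h0, h1, h2, map_add]
    simp
    ring

open Matrix MatrixOrder Matrix.Norms.L2Operator in
/-- A positive definite form `M` and a symmetric form `N` have a common orthogonal basis, the
columns of `P`, normalized so that it is orthonormal for `M`. -/
theorem exists_simultaneous_diag {m : Type*} [Fintype m] [DecidableEq m] (M N : Matrix m m ℝ)
    (hM : M.PosDef) (hN : N.IsHermitian) :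
    ∃ (P : Matrix m m ℝ) (l : m → ℝ), Pᵀ * M * P = 1 ∧ Pᵀ * N * P = diagonal l := by
  obtain ⟨B, hB, rfl⟩ : ∃ B : Matrix m m ℝ, IsUnit B ∧ M = Bᵀ * B := by
    obtain ⟨B, hB⟩ := CStarAlgebra.nonneg_iff_eq_star_mul_self.mp hM.posSemidef.nonneg
    refine ⟨B, ?_, by simpa [star_eq_conjTranspose] using hB⟩
    have h := hM.isUnit
    rw [hB, isUnit_iff_isUnit_det, det_mul] at h
    exact (isUnit_iff_isUnit_det B).mpr (isUnit_of_mul_isUnit_right h)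
  have hBd : IsUnit B.det := (isUnit_iff_isUnit_det B).mp hB
  set A := (B⁻¹)ᵀ * N * B⁻¹ with hA
  have hAh : A.IsHermitian := by
    have := isHermitian_conjTranspose_mul_mul B⁻¹ hN
    rwa [conjTranspose_eq_transpose_of_trivial] at this
  have hs := hAh.spectral_theorem
  set U : Matrix m m ℝ := (↑hAh.eigenvectorUnitary : Matrix m m ℝ) with hU
  have hUU : Uᵀ * U = 1 := by
    have := Unitary.coe_star_mul_self hAh.eigenvectorUnitary
    simpa [star_eq_conjTranspose] using this
  refine ⟨B⁻¹ * U, hAh.eigenvalues, ?_, ?_⟩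
  · rw [transpose_mul]
    have h1 : (B⁻¹)ᵀ * Bᵀ = 1 := by rw [← transpose_mul, mul_nonsing_inv _ hBd, transpose_one]
    calc Uᵀ * (B⁻¹)ᵀ * (Bᵀ * B) * (B⁻¹ * U) = Uᵀ * ((B⁻¹)ᵀ * Bᵀ) * (B * B⁻¹) * U := by
          simp only [Matrix.mul_assoc]
      _ = 1 := by rw [h1, mul_nonsing_inv _ hBd]; simpa using hUU
  · rw [transpose_mul]
    have h2 : A = U * diagonal hAh.eigenvalues * Uᵀ := by
      rw [Unitary.conjStarAlgAut_apply] at hs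
      simpa [star_eq_conjTranspose, Function.comp_def] using hs
    calc Uᵀ * (B⁻¹)ᵀ * N * (B⁻¹ * U) = Uᵀ * A * U := by simp only [hA, Matrix.mul_assoc]
      _ = (Uᵀ * U) * diagonal hAh.eigenvalues * (Uᵀ * U) := by
          conv_lhs => rw [h2]
          simp only [Matrix.mul_assoc]
      _ = _ := by simp [hUU]

/-! ### The matrix-tree theorem -/

/-- The oriented incidence vector of an edge `e`: `1` at the tail, `-1` at the head. The
orientation is the one given by the representative `Quot.out e`. On a diagonal element of `Sym2 V`
the vector is `0`. -/
noncomputable def inc {V : Type} [DecidableEq V] (e : Sym2 V) (v : V) : ℤ :=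
  (if v = (Quot.out e).1 then 1 else 0) - (if v = (Quot.out e).2 then 1 else 0)

/-- The reduced oriented incidence matrix of `G`, with the row of the root `v₀` deleted. -/
noncomputable def incMat {V : Type} [DecidableEq V] (G : SimpleGraph V) (v₀ : V) :
    Matrix {v : V // v ≠ v₀} G.edgeSet ℤ :=
  Matrix.of fun i e => inc e.1 i.1

theorem mk_out {V : Type} (e : Sym2 V) : s((Quot.out e).1, (Quot.out e).2) = e := Quot.out_eq e

/-- Pairing a function vanishing at the root with a column of the reduced incidence matrix gives
the difference of its values at the endpoints of the edge. -/
theorem sum_mul_inc {V R : Type} [Fintype V] [DecidableEq V] [CommRing R] (v₀ : V) (g : V → R)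
    (hg : g v₀ = 0) (e : Sym2 V) :
    ∑ i : {v : V // v ≠ v₀}, g i.1 * (inc e i.1 : R) =
      g (Quot.out e).1 - g (Quot.out e).2 := by
  have h : ∑ i : {v : V // v ≠ v₀}, g i.1 * (inc e i.1 : R) = ∑ i : V, g i * (inc e i : R) := by
    rw [← Finset.sum_subtype (Finset.univ.filter (· ≠ v₀)) (by simp)
      (fun v => g v * (inc e v : R)), Finset.sum_filter]
    refine Finset.sum_congr rfl fun i _ => ?_
    split_ifs with hi
    · rfl
    · simp only [ne_eq, not_not] at hi
      simp [hi, hg]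
  rw [h]
  simp [inc, mul_sub, Finset.sum_sub_distrib]

/-- The minor of a connected edge set is `±1`: following a path from the root, every standard basis
vector is an integer combination of the columns, so the square submatrix is
surjective over `ℤ`. -/
theorem isUnit_det_minor {V : Type} [Fintype V] [DecidableEq V] (G : SimpleGraph V) (v₀ : V)
    (S : Finset G.edgeSet) (ε : {v : V // v ≠ v₀} ≃ S)
    (hS : (SimpleGraph.fromEdgeSet (Subtype.val '' (S : Set G.edgeSet))).Connected) :
    IsUnit ((incMat G v₀).submatrix id (fun j => (ε j).1)).det := by
  set B := (incMat G v₀).submatrix id (fun j => (ε j).1) with hB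
  let p : V → ({v : V // v ≠ v₀} → ℤ) := fun v i => if i.1 = v then 1 else 0
  have hcol : ∀ e ∈ S, p (Quot.out e.1).1 - p (Quot.out e.1).2 ∈ LinearMap.range B.mulVecLin := by
    intro e he
    refine ⟨Pi.single (ε.symm ⟨e, he⟩) 1, ?_⟩
    ext i
    simp [hB, incMat, inc, p]
  have hstep : ∀ u v, (SimpleGraph.fromEdgeSet (Subtype.val '' (S : Set G.edgeSet))).Adj u v →
      p u ∈ LinearMap.range B.mulVecLin → p v ∈ LinearMap.range B.mulVecLin := by
    intro u v huv hu
    rw [SimpleGraph.fromEdgeSet_adj] at huv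
    obtain ⟨⟨e, he, heq⟩, -⟩ := huv
    have h := hcol e he
    have h2 : s((Quot.out e.1).1, (Quot.out e.1).2) = s(u, v) := (mk_out e.1).trans heq
    rcases Sym2.eq_iff.mp h2 with ⟨h3, h4⟩ | ⟨h3, h4⟩
    · rw [h3, h4] at h
      simpa using sub_mem hu h
    · rw [h3, h4] at h
      simpa using add_mem h hu
  have hroot : p v₀ ∈ LinearMap.range B.mulVecLin := by
    have : p v₀ = 0 := by
      ext i
      simp [p, i.2]
    rw [this]
    exact zero_mem _
  have hall : ∀ v, p v ∈ LinearMap.range B.mulVecLin := by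
    intro v
    have hr := (SimpleGraph.reachable_iff_reflTransGen v₀ v).mp (hS.preconnected v₀ v)
    induction hr with
    | refl => exact hroot
    | tail _ hbc ih => exact hstep _ _ hbc ih
  rw [← Matrix.isUnit_iff_isUnit_det, ← Matrix.mulVec_surjective_iff_isUnit]
  intro y
  have hy : y ∈ LinearMap.range B.mulVecLin := by
    rw [pi_eq_sum_univ y]
    refine Submodule.sum_mem _ fun i _ => Submodule.smul_mem _ _ ?_
    convert hall i.1 using 2
    simp [p, Subtype.ext_iff, eq_comm]
  exact hy

/-- The minor of a disconnected edge set vanishes: the indicator function of a component that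
misses the root lies in its left kernel. -/
theorem det_minor_eq_zero {V : Type} [Fintype V] [DecidableEq V] (G : SimpleGraph V) (v₀ : V)
    (S : Finset G.edgeSet) (ε : {v : V // v ≠ v₀} ≃ S)
    (hS : ¬ (SimpleGraph.fromEdgeSet (Subtype.val '' (S : Set G.edgeSet))).Connected) :
    ((incMat G v₀).submatrix id (fun j => (ε j).1)).det = 0 := by
  classical
  set H := SimpleGraph.fromEdgeSet (Subtype.val '' (S : Set G.edgeSet)) with hH
  obtain ⟨u, hu⟩ : ∃ u, ¬ H.Reachable u v₀ := by
    by_contra hcon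
    push Not at hcon
    have : Nonempty V := ⟨v₀⟩
    exact hS ⟨fun x y => (hcon x).trans (hcon y).symm⟩
  have hne : u ≠ v₀ := by
    rintro rfl
    exact hu (SimpleGraph.Reachable.refl _)
  let g : V → ℤ := fun v => if H.Reachable u v then 1 else 0
  rw [← Matrix.exists_vecMul_eq_zero_iff]
  refine ⟨fun i => g i.1, ?_, ?_⟩
  · intro h
    have := congrFun h ⟨u, hne⟩
    simp [g] at this
  · ext j
    have h := sum_mul_inc v₀ g (by simp [g, hu]) (ε j).1.1
    simp only [Int.cast_id] at h
    simp only [Matrix.vecMul, dotProduct, Matrix.submatrix_apply, id, incMat, Matrix.of_apply, h,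
      Pi.zero_apply]
    have hadj : H.Adj (Quot.out (ε j).1.1).1 (Quot.out (ε j).1.1).2 := by
      rw [hH, SimpleGraph.fromEdgeSet_adj, mk_out]
      refine ⟨⟨(ε j).1, (ε j).2, rfl⟩, ?_⟩
      have h1 := (ε j).1.2
      rw [← mk_out (ε j).1.1] at h1
      exact (SimpleGraph.mem_edgeSet G |>.mp h1).ne
    have : H.Reachable u (Quot.out (ε j).1.1).1 ↔ H.Reachable u (Quot.out (ε j).1.1).2 :=
      ⟨fun h => h.trans hadj.reachable, fun h => h.trans hadj.symm.reachable⟩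
    simp [g, this]

open Matrix in
/-- The weighted matrix-tree theorem over an arbitrary commutative ring. -/
theorem det_weighted_eq_sum {V R : Type} [Fintype V] [DecidableEq V] [CommRing R]
    (G : SimpleGraph V) [Fintype G.edgeSet] (v₀ : V) (x : G.edgeSet → R)
    [DecidablePred (IsSpanningTree G)] :
    ((incMat G v₀).map (Int.cast : ℤ → R) * diagonal x *
      ((incMat G v₀).map (Int.cast : ℤ → R))ᵀ).det =
      ∑ T : Finset G.edgeSet, if IsSpanningTree G T then ∏ e ∈ T, x e else 0 := by
  classical
  have hcard : Fintype.card {v : V // v ≠ v₀} = Fintype.card V - 1 := by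
    rw [Fintype.card_subtype_compl]; simp
  rw [det_mul_eq_sum_fun, ← Finset.sum_fiberwise (s := Finset.univ)
    (g := fun f : {v : V // v ≠ v₀} → G.edgeSet => Finset.univ.image f)]
  refine Finset.sum_congr rfl fun S _ => ?_
  -- The choices `f` are grouped by their image `S`. If `S` does not have `|V| - 1` elements, none
  -- of them is injective; otherwise they are the `ε ∘ σ` for permutations `σ`.
  by_cases hS : S.card = Fintype.card {v : V // v ≠ v₀}
  swap
  · rw [if_neg (fun h => hS (by rw [hcard, h.1]))]
    refine Finset.sum_eq_zero fun f hf => ?_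
    have hni : ¬ Function.Injective f := by
      intro hinj
      apply hS
      rw [← (Finset.mem_filter.mp hf).2, Finset.card_image_of_injective _ hinj]
      simp
    rw [Function.Injective] at hni
    push Not at hni
    obtain ⟨i, j, hij, hne⟩ := hni
    rw [det_zero_of_row_eq hne, mul_zero]
    ext k
    simp [hij]
  obtain ⟨ε⟩ : Nonempty ({v : V // v ≠ v₀} ≃ S) := by
    rw [← Fintype.card_eq]; simp [hS]
  set B : Matrix {v : V // v ≠ v₀} {v : V // v ≠ v₀} ℤ :=
    (incMat G v₀).submatrix id (fun j => (ε j).1) with hB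
  have hsum : ∑ f ∈ Finset.univ.filter (fun f : {v : V // v ≠ v₀} → G.edgeSet =>
        Finset.univ.image f = S),
      (∏ i, ((incMat G v₀).map (Int.cast : ℤ → R) * diagonal x) i (f i)) *
        (Matrix.of fun i j => ((incMat G v₀).map (Int.cast : ℤ → R))ᵀ (f i) j).det =
      ∑ σ : Equiv.Perm {v : V // v ≠ v₀}, (∏ e ∈ S, x e) *
        ((∏ i, (B i (σ i) : R)) * ((Equiv.Perm.sign σ : ℤ) * (B.det : R))) := by
    symm
    refine Finset.sum_bij (fun σ _ i => (ε (σ i)).1) ?_ ?_ ?_ ?_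
    · intro σ _
      simp only [Finset.mem_filter, Finset.mem_univ, true_and]
      ext e
      simp only [Finset.mem_image, Finset.mem_univ, true_and]
      constructor
      · rintro ⟨i, rfl⟩
        exact (ε (σ i)).2
      · intro he
        exact ⟨σ.symm (ε.symm ⟨e, he⟩), by simp⟩
    · intro σ _ τ _ h
      ext1 i
      exact ε.injective (Subtype.ext (congrFun h i))
    · intro f hf
      have him := (Finset.mem_filter.mp hf).2
      have hmem : ∀ i, f i ∈ S := fun i => by
        rw [← him]; exact Finset.mem_image_of_mem _ (Finset.mem_univ i)
      have hinj : Function.Injective f := by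
        rw [← Set.injOn_univ, ← Finset.coe_univ, ← Finset.card_image_iff, him, hS]; rfl
      refine ⟨Equiv.ofBijective (fun i => ε.symm ⟨f i, hmem i⟩) ?_, Finset.mem_univ _, ?_⟩
      · rw [← Finite.injective_iff_bijective]
        intro i j hij
        exact hinj (congrArg Subtype.val (ε.symm.injective hij))
      · ext1 i
        simp
    · intro σ _
      have h1 : ∏ i, x (ε (σ i)).1 = ∏ e ∈ S, x e := by
        rw [Equiv.prod_comp σ (fun i => x (ε i).1), Equiv.prod_comp ε (fun e => x e.1),
          Finset.prod_coe_sort]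
      have h2 : (Matrix.of fun i j => ((incMat G v₀).map (Int.cast : ℤ → R))ᵀ (ε (σ i)).1 j) =
          ((B.map (Int.cast : ℤ → R))ᵀ).submatrix σ id := by
        ext i j
        simp [hB]
      rw [h2, det_permute, det_transpose, Int.cast_det]
      simp only [mul_diagonal, Finset.prod_mul_distrib, h1]
      simp only [hB, map_apply, submatrix_apply, id]
      ring
  rw [hsum, ← Finset.mul_sum]
  have hdet : ∑ σ : Equiv.Perm {v : V // v ≠ v₀},
      ((∏ i, (B i (σ i) : R)) * ((Equiv.Perm.sign σ : ℤ) * (B.det : R))) =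
      ((B.det * B.det : ℤ) : R) := by
    have : B.det = ∑ σ : Equiv.Perm {v : V // v ≠ v₀},
        ((Equiv.Perm.sign σ : ℤ) * ∏ i, B i (σ i)) := by
      rw [← det_transpose, det_apply']; simp
    conv_rhs => rw [Int.cast_mul]; arg 1; rw [this]
    push_cast
    rw [Finset.sum_mul]
    refine Finset.sum_congr rfl fun σ _ => ?_
    ring
  rw [hdet]
  split_ifs with hT
  · have hu := isUnit_det_minor G v₀ S ε hT.2
    rw [← hB] at hu
    rw [Int.isUnit_mul_self hu]
    simp
  · rw [hB, det_minor_eq_zero G v₀ S ε (fun h => hT ⟨by rw [hS, hcard], h⟩)]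
    simp

/-! ### Positivity -/

open Matrix in
/-- A weighted Laplacian of a simple graph determines its weights. -/
theorem weighted_eq_zero {V : Type} [Fintype V] [DecidableEq V]
    (G : SimpleGraph V) [Fintype G.edgeSet] (v₀ : V) (v : G.edgeSet → ℝ)
    (h : (incMat G v₀).map (Int.cast : ℤ → ℝ) * diagonal v *
      ((incMat G v₀).map (Int.cast : ℤ → ℝ))ᵀ = 0) : v = 0 := by
  set B := (incMat G v₀).map (Int.cast : ℤ → ℝ) with hB
  have hvec : ∀ g : V → ℝ, (fun i : {v : V // v ≠ v₀} => g i.1 - g v₀) ᵥ* B =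
      fun e => g (Quot.out e.1).1 - g (Quot.out e.1).2 := by
    intro g
    ext e
    have := sum_mul_inc v₀ (fun w => g w - g v₀) (sub_self _) e.1
    simpa [vecMul, dotProduct, hB, incMat] using this
  -- The form `∑ v e (dg)(dk)` is unchanged when constants are added to `g` and `k`, so it vanishes
  -- also on functions that are nonzero at the root. At the indicators of the two endpoints of an
  -- edge `e` its value is `-v e`.
  have hQ : ∀ g k : V → ℝ, ∑ e, v e * ((g (Quot.out e.1).1 - g (Quot.out e.1).2) *
      (k (Quot.out e.1).1 - k (Quot.out e.1).2)) = 0 := by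
    intro g k
    have h1 : ((fun i : {v : V // v ≠ v₀} => g i.1 - g v₀) ᵥ* (B * diagonal v * Bᵀ)) ⬝ᵥ
        (fun i : {v : V // v ≠ v₀} => k i.1 - k v₀) = 0 := by
      rw [h]; simp
    rw [← vecMul_vecMul, ← dotProduct_mulVec, mulVec_transpose, hvec, ← vecMul_vecMul, hvec] at h1
    rw [← h1]
    simp only [dotProduct, vecMul_diagonal]
    refine Finset.sum_congr rfl fun e _ => ?_
    ring
  ext e
  have hout := mk_out e.1
  have hne : (Quot.out e.1).1 ≠ (Quot.out e.1).2 := by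
    have h1 := e.2
    rw [← mk_out e.1] at h1
    exact (SimpleGraph.mem_edgeSet G |>.mp h1).ne
  have h1 := hQ (Pi.single (Quot.out e.1).1 1) (Pi.single (Quot.out e.1).2 1)
  rw [Finset.sum_eq_single e] at h1
  · simpa [Pi.single_apply, hne, hne.symm] using h1
  · intro e' _ he'
    have hne' : s((Quot.out e'.1).1, (Quot.out e'.1).2) ≠
        s((Quot.out e.1).1, (Quot.out e.1).2) := by
      rw [mk_out, mk_out]
      exact fun h => he' (Subtype.ext h)
    rw [Ne, Sym2.eq_iff] at hne'
    have hne2 : (Quot.out e'.1).1 ≠ (Quot.out e'.1).2 := by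
      have h1 := e'.2
      rw [← mk_out e'.1] at h1
      exact (SimpleGraph.mem_edgeSet G |>.mp h1).ne
    simp only [Pi.single_apply]
    grind
  · simp

theorem aeval_kirchhoff {V R : Type} [Fintype V] [DecidableEq V] [CommRing R] [Algebra ℝ R]
    (G : SimpleGraph V) [Fintype G.edgeSet] (v₀ : V) (x : G.edgeSet → R) :
    aeval x (kirchhoff G) = ((incMat G v₀).map (Int.cast : ℤ → R) * Matrix.diagonal x *
      ((incMat G v₀).map (Int.cast : ℤ → R)).transpose).det := by
  classical
  rw [det_weighted_eq_sum, kirchhoff, map_sum]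
  refine Finset.sum_congr rfl fun T _ => ?_
  split_ifs <;> simp

theorem sum_sq_sub_pos {m : Type} [Fintype m] (l : m → ℝ) (hl : l ≠ 0) (s : ℝ)
    (hs : ((Fintype.card m : ℝ) - 1) / Fintype.card m < s) :
    0 < (∑ i, l i ^ 2) - (1 - s) * (∑ i, l i) ^ 2 := by
  obtain ⟨j, hj⟩ := Function.ne_iff.mp hl
  have hpos : 0 < ∑ i, l i ^ 2 :=
    Finset.sum_pos' (fun i _ => sq_nonneg _) ⟨j, Finset.mem_univ _, sq_pos_of_ne_zero hj⟩
  have hcs : (∑ i, l i) ^ 2 ≤ (Fintype.card m : ℝ) * ∑ i, l i ^ 2 := by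
    simpa using sq_sum_le_card_mul_sum_sq (s := Finset.univ) (f := l)
  have hc : (0 : ℝ) < Fintype.card m := by
    have : Nonempty m := ⟨j⟩
    exact_mod_cast Fintype.card_pos
  rw [div_lt_iff₀ hc] at hs
  rcases le_or_gt (1 - s) 0 with h | h
  · nlinarith [sq_nonneg (∑ i, l i)]
  · nlinarith [mul_le_mul_of_nonneg_left hcs h.le]

open Matrix in
/-- The inequality for `p(t) = det (M + t N)`, with `M` positive definite and `N ≠ 0` symmetric:
`-p(0) p''(0) + s p'(0)² > 0` whenever `s > (d - 1) / d`, where `d` is the size of the matrices. -/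
theorem det_line_pos {m : Type} [Fintype m] [DecidableEq m] (M N : Matrix m m ℝ)
    (hM : M.PosDef) (hN : N.IsHermitian) (hN0 : N ≠ 0) (s : ℝ)
    (hs : ((Fintype.card m : ℝ) - 1) / Fintype.card m < s) (p : Polynomial ℝ)
    (hp : p = (M.map Polynomial.C + (Polynomial.X : Polynomial ℝ) • N.map Polynomial.C).det) :
    0 < -p.eval 0 * (Polynomial.derivative (Polynomial.derivative p)).eval 0 +
      s * (Polynomial.derivative p).eval 0 ^ 2 := by
  obtain ⟨P, l, h1, h2⟩ := exists_simultaneous_diag M N hM hN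
  have hPd : P.det * M.det * P.det = 1 := by
    simpa using congrArg Matrix.det h1
  have hP0 : P.det ≠ 0 := by
    intro h
    simp [h] at hPd
  have hl : l ≠ 0 := by
    rintro rfl
    apply hN0
    have hu : IsUnit P.det := hP0.isUnit
    have hut : IsUnit Pᵀ.det := by rwa [det_transpose]
    have h3 : Pᵀ⁻¹ * (Pᵀ * N * P) * P⁻¹ = N := by
      rw [Matrix.mul_assoc, mul_nonsing_inv_cancel_right _ _ hu,
        nonsing_inv_mul_cancel_left _ _ hut]
    rw [← h3, h2]
    simp
  have hprod : Polynomial.C (P.det ^ 2) * p =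
      ∏ i, (1 + Polynomial.C (l i) * Polynomial.X) := by
    have hmul : (P.map Polynomial.C)ᵀ *
        (M.map Polynomial.C + (Polynomial.X : Polynomial ℝ) • N.map Polynomial.C) *
        P.map Polynomial.C = diagonal fun i => (1 + Polynomial.C (l i) * Polynomial.X) := by
      have e1 : (P.map Polynomial.C)ᵀ * M.map Polynomial.C * P.map Polynomial.C = 1 := by
        rw [← transpose_map, ← Matrix.map_mul, ← Matrix.map_mul, h1]
        simp
      have e2 : (P.map Polynomial.C)ᵀ * N.map Polynomial.C * P.map Polynomial.C =
          diagonal fun i => Polynomial.C (l i) := by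
        rw [← transpose_map, ← Matrix.map_mul, ← Matrix.map_mul, h2]
        simp [diagonal_map]
      rw [Matrix.mul_add, Matrix.add_mul, e1, Matrix.mul_smul, Matrix.smul_mul, e2,
        ← diagonal_one, ← diagonal_smul, diagonal_add]
      congr 1
      ext1 i
      simp only [Pi.smul_apply, smul_eq_mul]
      rw [mul_comm]
    have := congrArg Matrix.det hmul
    rw [det_mul, det_mul, det_transpose, det_diagonal, ← hp] at this
    have hd : (P.map Polynomial.C).det = Polynomial.C P.det := by
      rw [RingHom.map_det]; rfl
    rw [← this, hd]
    simp only [map_pow]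
    ring
  obtain ⟨d0, d1, d2⟩ := prod_one_add_derivs l Finset.univ
  rw [← hprod] at d0 d1 d2
  simp only [Polynomial.derivative_C_mul, Polynomial.eval_C_mul] at d0 d1 d2
  have hpos := sum_sq_sub_pos l hl s hs
  have hc : 0 < P.det ^ 2 := by positivity
  refine pos_of_mul_pos_right (a := (P.det ^ 2) ^ 2) ?_ (by positivity)
  have : (P.det ^ 2) ^ 2 * (-p.eval 0 * (Polynomial.derivative (Polynomial.derivative p)).eval 0 +
      s * (Polynomial.derivative p).eval 0 ^ 2) =
      (∑ i, l i ^ 2) - (1 - s) * (∑ i, l i) ^ 2 := by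
    calc _ = -(P.det ^ 2 * p.eval 0) *
          (P.det ^ 2 * (Polynomial.derivative (Polynomial.derivative p)).eval 0) +
          s * (P.det ^ 2 * (Polynomial.derivative p).eval 0) ^ 2 := by ring
      _ = _ := by rw [d0, d1, d2]; ring
  rwa [this]

/-- for a finite connected simple graph `Γ` with `r + 1 ≥ 3` vertices and
`n ≥ 3` edges, for every spanning tree `T`, every point `a` of the cone
`C^n_{T>0} = { a ∈ ℝ^n_{≥0} : a_e > 0 for e ∈ T }`, and every `s > (r-1)/r`, the matrix
`-F·H_F + s·(∇F)ᵀ(∇F)` evaluated at `a` is positive definite. -/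
theorem kirchhoff_strictly_homog_logConcave_on_cone
    {V : Type} [Fintype V] [DecidableEq V] (G : SimpleGraph V) [Fintype G.edgeSet]
    (hconn : G.Connected) (r n : ℕ)
    (hV : Fintype.card V = r + 1) (hr : 3 ≤ r + 1)
    (hE : Fintype.card G.edgeSet = n) (hn : 3 ≤ n)
    (T : Finset G.edgeSet) (hT : IsSpanningTree G T)
    (a : G.edgeSet → ℝ) (ha0 : ∀ e, 0 ≤ a e) (haT : ∀ e ∈ T, 0 < a e)
    (s : ℝ) (hs : ((r : ℝ) - 1) / (r : ℝ) < s) :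
    (Matrix.of fun i j : G.edgeSet =>
        -(eval a (kirchhoff G)) * eval a (pderiv i (pderiv j (kirchhoff G)))
          + s * (eval a (pderiv i (kirchhoff G)) * eval a (pderiv j (kirchhoff G)))).PosDef := by
  classical
  obtain ⟨v₀⟩ := hconn.nonempty
  have hcard : Fintype.card {v : V // v ≠ v₀} = r := by
    rw [Fintype.card_subtype_compl, hV]; simp
  set F := kirchhoff G with hF
  set B := (incMat G v₀).map (Int.cast : ℤ → ℝ) with hB
  have hsymm : ∀ w : G.edgeSet → ℝ, (B * Matrix.diagonal w * B.transpose).IsHermitian := by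
    intro w
    rw [Matrix.IsHermitian, Matrix.conjTranspose_eq_transpose_of_trivial, Matrix.transpose_mul,
      Matrix.transpose_mul, Matrix.transpose_transpose, Matrix.diagonal_transpose,
      Matrix.mul_assoc]
  have hMdet : (B * Matrix.diagonal a * B.transpose).det ≠ 0 := by
    rw [hB, det_weighted_eq_sum]
    refine ne_of_gt (Finset.sum_pos' (fun S _ => ?_) ⟨T, Finset.mem_univ _, ?_⟩)
    · split_ifs
      · exact Finset.prod_nonneg fun e _ => ha0 e
      · exact le_rfl
    · rw [if_pos hT]
      exact Finset.prod_pos haT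
  have hM : (B * Matrix.diagonal a * B.transpose).PosDef := by
    have hps : (B * Matrix.diagonal a * B.transpose).PosSemidef := by
      have := (Matrix.PosSemidef.diagonal (d := a) ha0).mul_mul_conjTranspose_same B
      rwa [Matrix.conjTranspose_eq_transpose_of_trivial] at this
    exact hps.posDef_iff_det_ne_zero.mpr hMdet
  refine Matrix.PosDef.of_dotProduct_mulVec_pos ?_ fun v hv => ?_
  · ext i j
    simp only [Matrix.conjTranspose_apply, Matrix.of_apply, star_trivial]
    rw [pderiv_comm_apply]
    ring
  -- The line `t ↦ a + t v`.
  set L : G.edgeSet → Polynomial ℝ :=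
    fun e => Polynomial.C (a e) + Polynomial.C (v e) * Polynomial.X with hL
  have hN0 : B * Matrix.diagonal v * B.transpose ≠ 0 := fun h => hv (weighted_eq_zero G v₀ v h)
  have hp : aeval L F = ((B * Matrix.diagonal a * B.transpose).map Polynomial.C +
      (Polynomial.X : Polynomial ℝ) •
        (B * Matrix.diagonal v * B.transpose).map Polynomial.C).det := by
    rw [hF, aeval_kirchhoff G v₀]
    congr 1
    ext1 i j
    rw [Matrix.add_apply, Matrix.smul_apply, Matrix.map_apply, Matrix.map_apply]
    rw [Matrix.mul_apply, Matrix.mul_apply, Matrix.mul_apply]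
    simp only [hB, Matrix.mul_diagonal,
      Matrix.map_apply, Matrix.transpose_apply, map_sum, map_mul, map_intCast, hL, smul_eq_mul,
      Finset.mul_sum, ← Finset.sum_add_distrib]
    refine Finset.sum_congr rfl fun e _ => ?_
    ring
  have key := det_line_pos _ _ hM (hsymm v) hN0 s (by rwa [hcard]) _ hp
  have hL' : ∀ e, Polynomial.derivative (L e) = Polynomial.C (v e) := by
    intro e
    simp [hL]
  have k0 : (aeval L F).eval 0 = eval a F := eval_zero_aeval_line a v F
  have k1 : (Polynomial.derivative (aeval L F)).eval 0 = ∑ i, v i * eval a (pderiv i F) := by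
    simp only [derivative_aeval_eq_sum, hL', Polynomial.eval_finsetSum, Polynomial.eval_C_mul]
    exact Finset.sum_congr rfl fun i _ => by rw [hL, eval_zero_aeval_line]
  have k2 : (Polynomial.derivative (Polynomial.derivative (aeval L F))).eval 0 =
      ∑ j, ∑ i, v j * (v i * eval a (pderiv i (pderiv j F))) := by
    simp only [derivative_aeval_eq_sum, hL', Polynomial.eval_finsetSum, Polynomial.eval_C_mul,
      map_sum, Polynomial.derivative_C_mul, Finset.mul_sum]
    exact Finset.sum_congr rfl fun j _ => Finset.sum_congr rfl fun i _ => by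
      rw [hL, eval_zero_aeval_line]
  rw [k0, k1, k2] at key
  refine lt_of_lt_of_eq key (Eq.symm ?_)
  simp only [dotProduct, Matrix.mulVec, Matrix.of_apply, star_trivial, sq, Finset.sum_mul,
    Finset.mul_sum]
  rw [Finset.sum_comm, ← Finset.sum_add_distrib]
  refine Finset.sum_congr rfl fun j _ => ?_
  rw [← Finset.sum_add_distrib]
  refine Finset.sum_congr rfl fun i _ => ?_
  ring
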